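/- For every natural number n, the polynomials P^{NF}_n and Q^{NF}_n both have degree exactly n+1. -/

import Mathlib

/-!
By strong induction on `n`, both polynomials have degree at most `n + 1` with a positive
coefficient in that degree (`posLead_PNF_QNF`). Every summand `PNF k * QNF (n - k)` of `QNF (n + 1)`
has degree `(k + 1) + (n - k + 1) = n + 2` with positive leading coefficient, so no cancellation
occurs in the sum; and `PNF (n + 1)` differs from `QNF (n + 1)` by a shift of `PNF n`, whose degree
is only `n + 1`.
-/

mutual
/-- `QNF n` is the polynomial whose value at `m` counts neutral terms of size `n`
with at most `m` distinct free indices. -/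
noncomputable def QNF : ℕ → Polynomial ℤ
  | 0 => Polynomial.X
  | n+1 => ∑ k ∈ (Finset.range (n+1)).attach, PNF k.1 * QNF (n - k.1)
termination_by n => (n, 0)
decreasing_by
  · exact Prod.Lex.left _ _ (Finset.mem_range.mp k.2)
  · exact Prod.Lex.left _ _ (Nat.lt_succ_of_le (Nat.sub_le n k.1))

/-- `PNF n` is the polynomial whose value at `m` counts β-normal forms of size `n`
with at most `m` distinct free indices. -/
noncomputable def PNF : ℕ → Polynomial ℤ
  | 0 => Polynomial.X
  | n+1 => (PNF n).comp (Polynomial.X + 1) + QNF (n+1)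
termination_by n => (n, 1)
decreasing_by
  · exact Prod.Lex.left _ _ (Nat.lt_succ_self n)
  · exact Prod.Lex.right _ (Nat.lt_succ_self 0)
end

/-- `p` has degree at most `d` and its coefficient in degree `d` is positive; positivity, rather
than mere nonvanishing, is what makes this stable under addition. -/
def PosLead (p : Polynomial ℤ) (d : ℕ) : Prop :=
  p.natDegree ≤ d ∧ 0 < p.coeff d

theorem PosLead.degree_eq {p : Polynomial ℤ} {d : ℕ} (h : PosLead p d) : p.degree = (d : ℕ) :=
  Polynomial.degree_eq_of_le_of_coeff_ne_zero
    (Polynomial.degree_le_of_natDegree_le h.1) h.2.ne'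

theorem PosLead.mul {p q : Polynomial ℤ} {d e : ℕ} (hp : PosLead p d) (hq : PosLead q e) :
    PosLead (p * q) (d + e) := by
  refine ⟨Polynomial.natDegree_mul_le_of_le hp.1 hq.1, ?_⟩
  rw [Polynomial.coeff_mul_add_eq_of_natDegree_le hp.1 hq.1]
  exact mul_pos hp.2 hq.2

theorem PosLead.sum {ι : Type*} {s : Finset ι} (hs : s.Nonempty) {f : ι → Polynomial ℤ} {d : ℕ}
    (h : ∀ i ∈ s, PosLead (f i) d) : PosLead (∑ i ∈ s, f i) d := by
  refine ⟨Polynomial.natDegree_sum_le_of_forall_le s f fun i hi => (h i hi).1, ?_⟩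
  rw [Polynomial.finsetSum_coeff]
  exact Finset.sum_pos (fun i hi => (h i hi).2) hs

/-- Adding a polynomial of smaller degree does not affect the leading term. -/
theorem PosLead.add_left {p q : Polynomial ℤ} {d : ℕ} (hp : p.natDegree < d) (hq : PosLead q d) :
    PosLead (p + q) d := by
  refine ⟨Polynomial.natDegree_add_le_of_degree_le hp.le hq.1, ?_⟩
  rw [Polynomial.coeff_add, Polynomial.coeff_eq_zero_of_natDegree_lt hp, zero_add]
  exact hq.2

theorem posLead_PNF_QNF (n : ℕ) : PosLead (PNF n) (n + 1) ∧ PosLead (QNF n) (n + 1) := by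
  induction n using Nat.strong_induction_on with
  | _ n ih =>
    cases n with
    | zero =>
      have hX : PosLead Polynomial.X (0 + 1) := by simp [PosLead]
      rw [PNF, QNF]
      exact ⟨hX, hX⟩
    | succ n =>
      have hQ : PosLead (QNF (n + 1)) (n + 1 + 1) := by
        rw [QNF]
        refine PosLead.sum (by simp) fun k _ => ?_
        have hk : k.1 < n + 1 := Finset.mem_range.mp k.2
        have h := (ih k.1 hk).1.mul (ih (n - k.1) (by omega)).2
        rwa [show k.1 + 1 + (n - k.1 + 1) = n + 1 + 1 by omega] at h
      refine ⟨?_, hQ⟩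
      rw [PNF]
      refine PosLead.add_left ?_ hQ
      have hX : (Polynomial.X + 1 : Polynomial ℤ).natDegree = 1 :=
        Polynomial.natDegree_X_add_C (1 : ℤ)
      have h := (ih n n.lt_succ_self).1.1
      rw [Polynomial.natDegree_comp, hX]
      omega

/-- The polynomials `PNF n` and `QNF n` both have degree exactly `n+1`. -/
theorem PNF_QNF_degree (n : ℕ) :
    (PNF n).degree = (n + 1 : ℕ) ∧ (QNF n).degree = (n + 1 : ℕ) := by
  exact ⟨(posLead_PNF_QNF n).1.degree_eq, (posLead_PNF_QNF n).2.degree_eq⟩
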